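/- arXiv:2012.08465 — 2 statements merged into one kernel-verified Lean document; each statement's English description precedes it below -/
import Mathlib

section
/- Let d ≥ 2, let S = {x ∈ ℝ^d : ‖x‖ = 1} be the unit sphere, and let σ denote the uniform (rotation-invariant) probability measure on S. Fix α > 0 and for a Borel probability measure μ on S define L_α(μ) = ∫_S log( ∫_S e^{α(⟨x,y⟩ − 1)} dμ(y) ) dμ(x). Then for every Borel probability measure μ on S one has L_α(μ) ≥ L_α(σ), and equality holds if and only if μ = σ; that is, the uniform probability measure is the unique minimizer of L_α over probability measures on S. -/
open scoped RealInnerProductSpace BigOperators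
open MeasureTheory

/-- The map induced on the unit sphere of `ℝ^d` by a linear isometry (rotation). -/
noncomputable def sphereRot {d : ℕ}
    (R : EuclideanSpace ℝ (Fin d) ≃ₗᵢ[ℝ] EuclideanSpace ℝ (Fin d))
    (x : Metric.sphere (0 : EuclideanSpace ℝ (Fin d)) 1) :
    Metric.sphere (0 : EuclideanSpace ℝ (Fin d)) 1 :=
  ⟨R x, by
    have hx : ‖(x : EuclideanSpace ℝ (Fin d))‖ = 1 := mem_sphere_zero_iff_norm.mp x.2
    simp [mem_sphere_zero_iff_norm, R.norm_map, hx]⟩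

/-! Write `f` for the potential of `μ`. By rotation invariance the potential of `σ` is a constant
`c`, so `L_α(σ) = log c`. Testing positive definiteness of the kernel on `μ / f` against a multiple
of `σ`, and bounding the energy of `μ / f` by its mass `∫ f⁻¹ dμ` with the Schur test, yields
`∫ f⁻¹ dμ ≤ c⁻¹`. By Jensen, `L_α(μ) = ∫ log f dμ ≥ -log ∫ f⁻¹ dμ ≥ log c`. Equality forces `f = c`
`μ`-almost everywhere, so `μ - σ` has zero energy, and strict positive definiteness gives `μ = σ`.
The kernel is strictly positive definite because, on the sphere, it is a dilated Gaussian, which is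
the characteristic function of a measure of full support. -/

section HarmonicGeometricMean

variable {X : Type*} [MeasurableSpace X] {μ : Measure X} [IsProbabilityMeasure μ] {f : X → ℝ}

theorem inv_exp_integral_log_le_integral_inv (hf : ∀ x, 0 < f x)
    (hlog : Integrable (fun x => Real.log (f x)) μ) (hinv : Integrable (fun x => (f x)⁻¹) μ) :
    (Real.exp (∫ x, Real.log (f x) ∂μ))⁻¹ ≤ ∫ x, (f x)⁻¹ ∂μ := by
  have hexp (x : X) : Real.exp (-Real.log (f x)) = (f x)⁻¹ := by
    rw [Real.exp_neg, Real.exp_log (hf x)]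
  have hjensen := convexOn_exp.map_integral_le Real.continuous_exp.continuousOn isClosed_univ
    (ae_of_all μ fun _ => Set.mem_univ _) hlog.neg
    (by simpa only [Function.comp_def, Pi.neg_apply, hexp] using hinv)
  simpa only [Pi.neg_apply, integral_neg, Real.exp_neg, hexp] using hjensen

theorem ae_eq_exp_integral_log_of_integral_inv_le (hf : ∀ x, 0 < f x)
    (hlog : Integrable (fun x => Real.log (f x)) μ) (hinv : Integrable (fun x => (f x)⁻¹) μ)
    (hle : ∫ x, (f x)⁻¹ ∂μ ≤ (Real.exp (∫ x, Real.log (f x) ∂μ))⁻¹) :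
    f =ᵐ[μ] fun _ => Real.exp (∫ x, Real.log (f x) ∂μ) := by
  have hexp (x : X) : Real.exp (-Real.log (f x)) = (f x)⁻¹ := by
    rw [Real.exp_neg, Real.exp_log (hf x)]
  have hjensen := strictConvexOn_exp.ae_eq_const_or_map_average_lt
    Real.continuous_exp.continuousOn isClosed_univ (ae_of_all μ fun _ => Set.mem_univ _) hlog.neg
    (by simpa only [Function.comp_def, Pi.neg_apply, hexp] using hinv)
  simp only [average_eq_integral, Pi.neg_apply, integral_neg] at hjensen
  rcases hjensen with hconst | hlt
  · filter_upwards [hconst] with x hx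
    rw [← neg_injective hx, Real.exp_log (hf x)]
  · simp only [hexp, Real.exp_neg] at hlt
    exact absurd hle hlt.not_ge

end HarmonicGeometricMean

section KernelEnergy

open Set

variable {X Y : Type*} [MeasurableSpace X] [MeasurableSpace Y]

/-- The potential `x ↦ ∫ K(x, y) dμ(y)` of the measure `μ` for the kernel `K`. -/
noncomputable def kernelPotential (K : X → X → ℝ) (μ : Measure X) (x : X) : ℝ :=
  ∫ y, K x y ∂μ

/-- The mutual energy `∬ K(x, y) dν(y) dμ(x)` of two measures for the kernel `K`. -/
noncomputable def mutualEnergy (K : X → X → ℝ) (μ ν : Measure X) : ℝ :=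
  ∫ x, kernelPotential K ν x ∂μ

/-- The energy of the signed measure `μ - ν`, expanded by bilinearity so that it only involves
positive measures. -/
noncomputable def differenceEnergy (K : X → X → ℝ) (μ ν : Measure X) : ℝ :=
  mutualEnergy K μ μ - mutualEnergy K μ ν - mutualEnergy K ν μ + mutualEnergy K ν ν

/-- The logarithmic energy `L_K(μ) = ∫ log (∫ K(x, y) dμ(y)) dμ(x)`. -/
noncomputable def logPotentialEnergy (K : X → X → ℝ) (μ : Measure X) : ℝ :=
  ∫ x, Real.log (kernelPotential K μ x) ∂μ

/-- The measure `μ / f`, where `f` is the potential of `μ`. It serves as a test measure whose energy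
is at most its mass. Values of the density are clamped to `[0, ∞)`. -/
noncomputable def invPotentialMeasure (K : X → X → ℝ) (μ : Measure X) : Measure X :=
  μ.withDensity fun x => ENNReal.ofReal (kernelPotential K μ x)⁻¹

/-- Integral strict positive definiteness: the energy of a nonzero finite signed measure, written
as a difference `μ - ν` of finite positive measures, is positive. It is meant for bounded measurable
kernels, whose energies do not involve junk values of the integral. -/
structure IsStrictlyPosDefKernel (K : X → X → ℝ) : Prop where
  differenceEnergy_nonneg (μ ν : Measure X) [IsFiniteMeasure μ] [IsFiniteMeasure ν] :
    0 ≤ differenceEnergy K μ ν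
  eq_of_differenceEnergy_eq_zero (μ ν : Measure X) [IsFiniteMeasure μ] [IsFiniteMeasure ν] :
    differenceEnergy K μ ν = 0 → μ = ν

theorem mutualEnergy_map {g : X → Y} (hg : MeasurableEmbedding g) (K : Y → Y → ℝ)
    (μ ν : Measure X) :
    mutualEnergy K (μ.map g) (ν.map g) = mutualEnergy (fun x y => K (g x) (g y)) μ ν := by
  simp only [mutualEnergy, kernelPotential, hg.integral_map]

theorem IsStrictlyPosDefKernel.comp_measurableEmbedding {K : Y → Y → ℝ}
    (hK : IsStrictlyPosDefKernel K) {g : X → Y} (hg : MeasurableEmbedding g) :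
    IsStrictlyPosDefKernel fun x y => K (g x) (g y) := by
  have hmap (μ ν : Measure X) : differenceEnergy (fun x y => K (g x) (g y)) μ ν =
      differenceEnergy K (μ.map g) (ν.map g) := by
    simp only [differenceEnergy, mutualEnergy_map hg]
  refine ⟨fun μ ν _ _ => ?_, fun μ ν _ _ h => ?_⟩
  · rw [hmap]
    exact hK.differenceEnergy_nonneg _ _
  · rw [hmap] at h
    rw [← hg.comap_map μ, hK.eq_of_differenceEnergy_eq_zero _ _ h, hg.comap_map]

variable {K : X → X → ℝ} {a b c : ℝ} {μ ν σ : Measure X}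

theorem mutualEnergy_eq_of_kernelPotential_eq_const (hν : ∀ x, kernelPotential K ν x = c)
    (μ : Measure X) : mutualEnergy K μ ν = μ.real univ * c := by
  simp [mutualEnergy, hν]

theorem logPotentialEnergy_eq_of_kernelPotential_eq_const [IsProbabilityMeasure σ]
    (hσ : ∀ x, kernelPotential K σ x = c) : logPotentialEnergy K σ = Real.log c := by
  simp [logPotentialEnergy, hσ]

theorem kernelPotential_apply_of_measurePreserving {g : X → X} (hg : MeasurePreserving g μ μ)
    {x : X} (hK : Measurable (K (g x))) (hKg : ∀ y, K (g x) (g y) = K x y) :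
    kernelPotential K μ (g x) = kernelPotential K μ x := by
  calc ∫ y, K (g x) y ∂μ = ∫ y, K (g x) y ∂(μ.map g) := by rw [hg.map_eq]
    _ = ∫ y, K (g x) (g y) ∂μ :=
      integral_map hg.measurable.aemeasurable hK.aestronglyMeasurable
    _ = ∫ y, K x y ∂μ := by simp only [hKg]

theorem measurable_kernelPotential [SFinite μ] (hK : Measurable (Function.uncurry K)) :
    Measurable (kernelPotential K μ) :=
  hK.stronglyMeasurable.integral_prod_right.measurable

theorem kernelPotential_mem_Icc [IsProbabilityMeasure μ] (hK : Measurable (Function.uncurry K))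
    (hKab : ∀ x y, K x y ∈ Icc a b) (x : X) : kernelPotential K μ x ∈ Icc a b :=
  (convex_Icc a b).integral_mem isClosed_Icc (ae_of_all _ (hKab x))
    (.of_mem_Icc a b hK.of_uncurry_left.aemeasurable (ae_of_all _ (hKab x)))

theorem integrable_log_kernelPotential [IsProbabilityMeasure μ]
    (hK : Measurable (Function.uncurry K)) (ha : 0 < a) (hKab : ∀ x y, K x y ∈ Icc a b) :
    Integrable (fun x => Real.log (kernelPotential K μ x)) μ := by
  refine .of_mem_Icc (Real.log a) (Real.log b) (measurable_kernelPotential hK).log.aemeasurable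
    (ae_of_all _ fun x => ?_)
  obtain ⟨hax, hxb⟩ := kernelPotential_mem_Icc (μ := μ) hK hKab x
  exact ⟨Real.log_le_log ha hax, Real.log_le_log (ha.trans_le hax) hxb⟩

theorem mutualEnergy_comm [IsFiniteMeasure μ] [IsFiniteMeasure ν]
    (hK : Measurable (Function.uncurry K)) (hKab : ∀ x y, K x y ∈ Icc a b)
    (hKsymm : ∀ x y, K x y = K y x) : mutualEnergy K μ ν = mutualEnergy K ν μ := by
  have hint : Integrable (Function.uncurry K) (μ.prod ν) :=
    .of_mem_Icc a b hK.aemeasurable (ae_of_all _ fun p => hKab p.1 p.2)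
  simp only [mutualEnergy, kernelPotential, integral_integral_swap hint, hKsymm]

theorem differenceEnergy_eq_of_kernelPotential_eq_const [IsFiniteMeasure μ] [IsFiniteMeasure ν]
    (hK : Measurable (Function.uncurry K)) (hKab : ∀ x y, K x y ∈ Icc a b)
    (hKsymm : ∀ x y, K x y = K y x) (hν : ∀ x, kernelPotential K ν x = c) :
    differenceEnergy K μ ν =
      mutualEnergy K μ μ + (ν.real univ - 2 * μ.real univ) * c := by
  rw [differenceEnergy, mutualEnergy_comm (μ := ν) (ν := μ) hK hKab hKsymm]
  simp only [mutualEnergy_eq_of_kernelPotential_eq_const hν]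
  ring

theorem integral_withDensity_ofReal {w : X → ℝ} (hw : Measurable w) (hw₀ : ∀ x, 0 ≤ w x)
    (g : X → ℝ) :
    ∫ x, g x ∂(μ.withDensity fun x => ENNReal.ofReal (w x)) = ∫ x, w x * g x ∂μ := by
  rw [integral_withDensity_eq_integral_toReal_smul hw.ennreal_ofReal
    (ae_of_all _ fun x => ENNReal.ofReal_lt_top)]
  simp only [ENNReal.toReal_ofReal (hw₀ _), smul_eq_mul]

-- The Schur test: bound `w x * w y` by `(w x ^ 2 + w y ^ 2) / 2` and use the symmetry of `K`.
theorem integral_prod_mul_mul_kernel_le [SFinite μ] {w : X → ℝ} (hK₀ : ∀ x y, 0 ≤ K x y)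
    (hKsymm : ∀ x y, K x y = K y x)
    (hint_sq : Integrable (fun p : X × X => w p.1 ^ 2 * K p.1 p.2) (μ.prod μ))
    (hint_mul : Integrable (fun p : X × X => w p.1 * (w p.2 * K p.1 p.2)) (μ.prod μ)) :
    ∫ p : X × X, w p.1 * (w p.2 * K p.1 p.2) ∂(μ.prod μ) ≤
      ∫ p : X × X, w p.1 ^ 2 * K p.1 p.2 ∂(μ.prod μ) := by
  have hint_swap : Integrable (fun p : X × X => w p.2 ^ 2 * K p.2 p.1) (μ.prod μ) :=
    hint_sq.swap
  have hswap : ∫ p : X × X, w p.2 ^ 2 * K p.2 p.1 ∂(μ.prod μ) =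
      ∫ p : X × X, w p.1 ^ 2 * K p.1 p.2 ∂(μ.prod μ) :=
    integral_prod_swap fun p : X × X => w p.1 ^ 2 * K p.1 p.2
  calc ∫ p : X × X, w p.1 * (w p.2 * K p.1 p.2) ∂(μ.prod μ)
    _ ≤ ∫ p : X × X, (w p.1 ^ 2 * K p.1 p.2 + w p.2 ^ 2 * K p.2 p.1) / 2 ∂(μ.prod μ) := by
        refine integral_mono hint_mul ((hint_sq.add hint_swap).div_const 2) fun p => ?_
        have hsq := mul_nonneg (hK₀ p.1 p.2) (sq_nonneg (w p.1 - w p.2))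
        simp only [hKsymm p.2 p.1]
        linarith
    _ = ∫ p : X × X, w p.1 ^ 2 * K p.1 p.2 ∂(μ.prod μ) := by
        rw [integral_div, integral_add hint_sq hint_swap, hswap, add_self_div_two]

theorem mutualEnergy_withDensity_le [IsFiniteMeasure μ] {w : X → ℝ} {C : ℝ}
    (hK : Measurable (Function.uncurry K)) (hKb : ∀ x y, K x y ∈ Icc 0 b)
    (hKsymm : ∀ x y, K x y = K y x) (hw : Measurable w) (hwC : ∀ x, w x ∈ Icc 0 C) :
    mutualEnergy K (μ.withDensity fun x => ENNReal.ofReal (w x))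
        (μ.withDensity fun x => ENNReal.ofReal (w x)) ≤
      ∫ x, w x ^ 2 * kernelPotential K μ x ∂μ := by
  have hKint : Integrable (fun p : X × X => K p.1 p.2) (μ.prod μ) :=
    .of_mem_Icc 0 b hK.aemeasurable (ae_of_all _ fun p => hKb p.1 p.2)
  have hwnorm (x : X) : ‖w x‖ ≤ C := by
    rw [Real.norm_of_nonneg (hwC x).1]
    exact (hwC x).2
  have hint_fst {f : X × X → ℝ} (hf : Integrable f (μ.prod μ)) :
      Integrable (fun p => w p.1 * f p) (μ.prod μ) :=
    hf.bdd_mul (hw.comp measurable_fst).aestronglyMeasurable (ae_of_all _ fun p => hwnorm p.1)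
  have hint_mul : Integrable (fun p : X × X => w p.1 * (w p.2 * K p.1 p.2)) (μ.prod μ) :=
    hint_fst <| hKint.bdd_mul (hw.comp measurable_snd).aestronglyMeasurable
      (ae_of_all _ fun p => hwnorm p.2)
  have hint_sq : Integrable (fun p : X × X => w p.1 ^ 2 * K p.1 p.2) (μ.prod μ) := by
    simpa only [sq, mul_assoc] using hint_fst (hint_fst hKint)
  calc mutualEnergy K (μ.withDensity fun x => ENNReal.ofReal (w x))
        (μ.withDensity fun x => ENNReal.ofReal (w x))
      = ∫ p : X × X, w p.1 * (w p.2 * K p.1 p.2) ∂(μ.prod μ) := by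
        simp only [mutualEnergy, kernelPotential,
          integral_withDensity_ofReal hw fun x => (hwC x).1, integral_prod _ hint_mul,
          integral_const_mul]
    _ ≤ ∫ p : X × X, w p.1 ^ 2 * K p.1 p.2 ∂(μ.prod μ) :=
        integral_prod_mul_mul_kernel_le (fun x y => (hKb x y).1) hKsymm hint_sq hint_mul
    _ = ∫ x, w x ^ 2 * kernelPotential K μ x ∂μ := by
        simp only [kernelPotential, integral_prod _ hint_sq, integral_const_mul]

theorem inv_kernelPotential_mem_Icc [IsProbabilityMeasure μ]
    (hK : Measurable (Function.uncurry K)) (ha : 0 < a) (hKab : ∀ x y, K x y ∈ Icc a b) (x : X) :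
    (kernelPotential K μ x)⁻¹ ∈ Icc 0 a⁻¹ := by
  have hax := (kernelPotential_mem_Icc (μ := μ) hK hKab x).1
  exact ⟨inv_nonneg.2 (ha.le.trans hax), inv_anti₀ ha hax⟩

theorem integrable_inv_kernelPotential [IsProbabilityMeasure μ]
    (hK : Measurable (Function.uncurry K)) (ha : 0 < a) (hKab : ∀ x y, K x y ∈ Icc a b) :
    Integrable (fun x => (kernelPotential K μ x)⁻¹) μ :=
  .of_mem_Icc 0 a⁻¹ (measurable_kernelPotential hK).inv.aemeasurable
    (ae_of_all _ (inv_kernelPotential_mem_Icc hK ha hKab))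

theorem isFiniteMeasure_invPotentialMeasure [IsProbabilityMeasure μ]
    (hK : Measurable (Function.uncurry K)) (ha : 0 < a) (hKab : ∀ x y, K x y ∈ Icc a b) :
    IsFiniteMeasure (invPotentialMeasure K μ) :=
  isFiniteMeasure_withDensity_ofReal (integrable_inv_kernelPotential hK ha hKab).2

theorem measureReal_univ_invPotentialMeasure [IsProbabilityMeasure μ]
    (hK : Measurable (Function.uncurry K)) (ha : 0 < a) (hKab : ∀ x y, K x y ∈ Icc a b) :
    (invPotentialMeasure K μ).real univ = ∫ x, (kernelPotential K μ x)⁻¹ ∂μ := by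
  simpa [invPotentialMeasure] using
    integral_withDensity_ofReal (μ := μ) (measurable_kernelPotential hK).inv
      (fun x => (inv_kernelPotential_mem_Icc hK ha hKab x).1) fun _ => (1 : ℝ)

theorem mutualEnergy_invPotentialMeasure_le [IsProbabilityMeasure μ]
    (hK : Measurable (Function.uncurry K)) (ha : 0 < a) (hKab : ∀ x y, K x y ∈ Icc a b)
    (hKsymm : ∀ x y, K x y = K y x) :
    mutualEnergy K (invPotentialMeasure K μ) (invPotentialMeasure K μ) ≤
      ∫ x, (kernelPotential K μ x)⁻¹ ∂μ := by
  have hpos (x : X) : 0 < kernelPotential K μ x :=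
    ha.trans_le (kernelPotential_mem_Icc hK hKab x).1
  calc mutualEnergy K (invPotentialMeasure K μ) (invPotentialMeasure K μ)
      ≤ ∫ x, (kernelPotential K μ x)⁻¹ ^ 2 * kernelPotential K μ x ∂μ :=
        mutualEnergy_withDensity_le hK (fun x y => Icc_subset_Icc_left ha.le (hKab x y)) hKsymm
          (measurable_kernelPotential hK).inv (inv_kernelPotential_mem_Icc hK ha hKab)
    _ = ∫ x, (kernelPotential K μ x)⁻¹ ∂μ := by
        simp only [sq, inv_mul_cancel_right₀ (hpos _).ne']

-- Test positive definiteness on `invPotentialMeasure K μ` and `m • σ`, where `m` is the mass of the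
-- former: it gives `0 ≤ m - c * m ^ 2`.
theorem IsStrictlyPosDefKernel.integral_inv_kernelPotential_le
    [IsProbabilityMeasure μ] [IsProbabilityMeasure σ] (hKpd : IsStrictlyPosDefKernel K)
    (hK : Measurable (Function.uncurry K)) (ha : 0 < a) (hKab : ∀ x y, K x y ∈ Icc a b)
    (hKsymm : ∀ x y, K x y = K y x) (hσ : ∀ x, kernelPotential K σ x = c) (hc : 0 < c) :
    ∫ x, (kernelPotential K μ x)⁻¹ ∂μ ≤ c⁻¹ := by
  set m := ∫ x, (kernelPotential K μ x)⁻¹ ∂μ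
  have hm : 0 ≤ m := integral_nonneg fun x => (inv_kernelPotential_mem_Icc hK ha hKab x).1
  set τ := ENNReal.ofReal m • σ with hτ
  have : IsFiniteMeasure (invPotentialMeasure K μ) :=
    isFiniteMeasure_invPotentialMeasure hK ha hKab
  have : IsFiniteMeasure τ := σ.smul_finite ENNReal.ofReal_ne_top
  have hτmass : τ.real univ = m := by simp [hτ, hm]
  have hτpot (x : X) : kernelPotential K τ x = m * c := by
    simp [← hσ x, kernelPotential, hτ, hm]
  have henergy := mutualEnergy_invPotentialMeasure_le (μ := μ) hK ha hKab hKsymm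
  have hpd := hKpd.differenceEnergy_nonneg (invPotentialMeasure K μ) τ
  rw [differenceEnergy_eq_of_kernelPotential_eq_const hK hKab hKsymm hτpot, hτmass,
    measureReal_univ_invPotentialMeasure hK ha hKab] at hpd
  rcases hm.eq_or_lt with hm | hm
  · rw [← hm]
    positivity
  · rw [← one_div, le_div_iff₀ hc]
    refine le_of_mul_le_mul_left ?_ hm
    linarith

theorem IsStrictlyPosDefKernel.log_le_logPotentialEnergy
    [IsProbabilityMeasure μ] [IsProbabilityMeasure σ] (hKpd : IsStrictlyPosDefKernel K)
    (hK : Measurable (Function.uncurry K)) (ha : 0 < a) (hKab : ∀ x y, K x y ∈ Icc a b)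
    (hKsymm : ∀ x y, K x y = K y x) (hσ : ∀ x, kernelPotential K σ x = c) (hc : 0 < c) :
    Real.log c ≤ logPotentialEnergy K μ := by
  have hharmonic : (Real.exp (logPotentialEnergy K μ))⁻¹ ≤ c⁻¹ :=
    (inv_exp_integral_log_le_integral_inv
        (fun x => ha.trans_le (kernelPotential_mem_Icc hK hKab x).1)
        (integrable_log_kernelPotential hK ha hKab)
        (integrable_inv_kernelPotential hK ha hKab)).trans
      (hKpd.integral_inv_kernelPotential_le hK ha hKab hKsymm hσ hc)
  exact (Real.log_le_iff_le_exp hc).2 ((inv_le_inv₀ (Real.exp_pos _) hc).1 hharmonic)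

theorem IsStrictlyPosDefKernel.eq_of_logPotentialEnergy_eq_log
    [IsProbabilityMeasure μ] [IsProbabilityMeasure σ] (hKpd : IsStrictlyPosDefKernel K)
    (hK : Measurable (Function.uncurry K)) (ha : 0 < a) (hKab : ∀ x y, K x y ∈ Icc a b)
    (hKsymm : ∀ x y, K x y = K y x) (hσ : ∀ x, kernelPotential K σ x = c) (hc : 0 < c)
    (hμ : logPotentialEnergy K μ = Real.log c) : μ = σ := by
  have hexp : Real.exp (logPotentialEnergy K μ) = c := by rw [hμ, Real.exp_log hc]
  have hharmonic : ∫ x, (kernelPotential K μ x)⁻¹ ∂μ ≤ (Real.exp (logPotentialEnergy K μ))⁻¹ := by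
    rw [hexp]
    exact hKpd.integral_inv_kernelPotential_le hK ha hKab hKsymm hσ hc
  have hconst : kernelPotential K μ =ᵐ[μ] fun _ => c := by
    rw [← hexp]
    exact ae_eq_exp_integral_log_of_integral_inv_le
      (fun x => ha.trans_le (kernelPotential_mem_Icc hK hKab x).1)
      (integrable_log_kernelPotential hK ha hKab) (integrable_inv_kernelPotential hK ha hKab)
      hharmonic
  have henergy : mutualEnergy K μ μ = c := by
    simp [mutualEnergy, integral_congr_ae hconst]
  apply hKpd.eq_of_differenceEnergy_eq_zero
  rw [differenceEnergy_eq_of_kernelPotential_eq_const hK hKab hKsymm hσ, henergy]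
  simp only [probReal_univ]
  ring

theorem IsStrictlyPosDefKernel.logPotentialEnergy_unique_minimizer
    [IsProbabilityMeasure μ] [IsProbabilityMeasure σ] (hKpd : IsStrictlyPosDefKernel K)
    (hK : Measurable (Function.uncurry K)) (ha : 0 < a) (hKab : ∀ x y, K x y ∈ Icc a b)
    (hKsymm : ∀ x y, K x y = K y x)
    (hσ : ∀ x y, kernelPotential K σ x = kernelPotential K σ y) :
    logPotentialEnergy K σ ≤ logPotentialEnergy K μ ∧
      (logPotentialEnergy K μ = logPotentialEnergy K σ ↔ μ = σ) := by
  obtain ⟨x₀⟩ : Nonempty X := nonempty_of_isProbabilityMeasure σ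
  have hσc (x : X) : kernelPotential K σ x = kernelPotential K σ x₀ := hσ x x₀
  have hc : 0 < kernelPotential K σ x₀ := ha.trans_le (kernelPotential_mem_Icc hK hKab x₀).1
  have hσlog := logPotentialEnergy_eq_of_kernelPotential_eq_const hσc
  refine ⟨?_, fun h => ?_, fun h => by rw [h]⟩
  · rw [hσlog]
    exact hKpd.log_le_logPotentialEnergy hK ha hKab hKsymm hσc hc
  · exact hKpd.eq_of_logPotentialEnergy_eq_log hK ha hKab hKsymm hσc hc (h.trans hσlog)

end KernelEnergy

section Bochner

open scoped ComplexConjugate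

variable {E : Type*} [NormedAddCommGroup E] [InnerProductSpace ℝ E] [MeasurableSpace E]
  [BorelSpace E] [SecondCountableTopology E] {μ ν ρ : Measure E} [IsFiniteMeasure μ]
  [IsFiniteMeasure ν] [IsFiniteMeasure ρ] {k : E → ℝ}

variable (μ ν) in
theorem integral_charFun_comm : ∫ x, charFun μ x ∂ν = ∫ x, charFun ν x ∂μ := by
  have hint : Integrable (fun p : E × E => Complex.exp (⟪p.2, p.1⟫ * Complex.I)) (ν.prod μ) :=
    .of_bound (C := 1) (Continuous.aestronglyMeasurable (by fun_prop))
      (ae_of_all _ fun p => (Complex.norm_exp_ofReal_mul_I _).le)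
  simp only [charFun_apply]
  rw [integral_integral_swap hint]
  simp only [real_inner_comm]

variable (μ) in
theorem integrable_charFun (ρ : Measure E) [IsFiniteMeasure ρ] : Integrable (charFun μ) ρ :=
  .of_bound stronglyMeasurable_charFun.aestronglyMeasurable _ (ae_of_all _ norm_charFun_le)

theorem charFun_conv_map_neg (t : E) :
    charFun (μ ∗ ν.map ((-1 : ℝ) • ·)) t = charFun μ t * conj (charFun ν t) := by
  rw [charFun_conv, charFun_map_smul, neg_one_smul, charFun_neg]

-- Both sides are the pairing of `ρ` with the measure `μ ∗ ν.map (-·)`.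
theorem mutualEnergy_eq_integral_charFun (hk : ∀ x, charFun ρ x = k x) :
    (mutualEnergy (fun x y => k (x - y)) μ ν : ℂ) =
      ∫ t, charFun μ t * conj (charFun ν t) ∂ρ := by
  have hneg : MeasurableEmbedding fun y : E => (-1 : ℝ) • y :=
    measurableEmbedding_const_smul₀ (by norm_num)
  calc (mutualEnergy (fun x y => k (x - y)) μ ν : ℂ)
      = ∫ x, ∫ y, charFun ρ (x - y) ∂ν ∂μ := by
        simp only [mutualEnergy, kernelPotential, hk, integral_complex_ofReal]
    _ = ∫ x, ∫ y, charFun ρ (x + y) ∂(ν.map ((-1 : ℝ) • ·)) ∂μ := by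
        simp only [hneg.integral_map]
        simp only [neg_one_smul, sub_eq_add_neg]
    _ = ∫ z, charFun ρ z ∂(μ ∗ ν.map ((-1 : ℝ) • ·)) := by
        rw [integral_conv (integrable_charFun ρ _)]
    _ = ∫ t, charFun μ t * conj (charFun ν t) ∂ρ := by
        rw [integral_charFun_comm]
        simp only [charFun_conv_map_neg]

variable (μ ν) in
theorem integrable_charFun_mul_conj_charFun (ρ : Measure E) [IsFiniteMeasure ρ] :
    Integrable (fun t => charFun μ t * conj (charFun ν t)) ρ :=
  (integrable_charFun (μ ∗ ν.map ((-1 : ℝ) • ·)) ρ).congr (ae_of_all _ charFun_conv_map_neg)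

theorem differenceEnergy_eq_integral_norm_charFun_sub_sq (hk : ∀ x, charFun ρ x = k x) :
    differenceEnergy (fun x y => k (x - y)) μ ν = ∫ t, ‖charFun μ t - charFun ν t‖ ^ 2 ∂ρ := by
  have hμμ := integrable_charFun_mul_conj_charFun μ μ ρ
  have hμν := integrable_charFun_mul_conj_charFun μ ν ρ
  have hνμ := integrable_charFun_mul_conj_charFun ν μ ρ
  have hνν := integrable_charFun_mul_conj_charFun ν ν ρ
  apply Complex.ofReal_injective
  simp only [differenceEnergy, Complex.ofReal_add, Complex.ofReal_sub,
    mutualEnergy_eq_integral_charFun hk, ← integral_complex_ofReal, Complex.ofReal_pow,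
    ← Complex.mul_conj']
  rw [← integral_sub' hμμ hμν, ← integral_sub' (hμμ.sub hμν) hνμ,
    ← integral_add' ((hμμ.sub hμν).sub hνμ) hνν]
  congr with t
  simp only [Pi.add_apply, Pi.sub_apply, map_sub]
  ring

theorem isStrictlyPosDefKernel_of_charFun_eq [CompleteSpace E] [ρ.IsOpenPosMeasure]
    (hk : ∀ x, charFun ρ x = k x) : IsStrictlyPosDefKernel fun x y => k (x - y) := by
  refine ⟨fun μ ν _ _ => ?_, fun μ ν _ _ h => ?_⟩
  · rw [differenceEnergy_eq_integral_norm_charFun_sub_sq hk]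
    positivity
  · rw [differenceEnergy_eq_integral_norm_charFun_sub_sq hk] at h
    have hcont : Continuous fun t => ‖charFun μ t - charFun ν t‖ ^ 2 :=
      (continuous_charFun.sub continuous_charFun).norm.pow 2
    have hint : Integrable (fun t => ‖charFun μ t - charFun ν t‖ ^ 2) ρ := by
      refine .of_bound hcont.aestronglyMeasurable ((μ.real Set.univ + ν.real Set.univ) ^ 2)
        (ae_of_all _ fun t => ?_)
      rw [Real.norm_of_nonneg (sq_nonneg _)]
      gcongr
      exact (norm_sub_le _ _).trans (add_le_add (norm_charFun_le t) (norm_charFun_le t))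
    have hzero : (fun t => ‖charFun μ t - charFun ν t‖ ^ 2) = 0 :=
      (hcont.ae_eq_iff_eq ρ continuous_zero).1
        ((integral_eq_zero_iff_of_nonneg (fun t => sq_nonneg _) hint).1 h)
    refine Measure.ext_of_charFun (funext fun t => ?_)
    simpa [sub_eq_zero] using congrFun hzero t

end Bochner

section Gaussian

open ProbabilityTheory

theorem isOpenPosMeasure_gaussianReal (m : ℝ) {v : NNReal} (hv : v ≠ 0) :
    (gaussianReal m v).IsOpenPosMeasure :=
  (gaussianReal_absolutelyContinuous' m hv).isOpenPosMeasure

variable {E : Type*} [NormedAddCommGroup E] [InnerProductSpace ℝ E] [FiniteDimensional ℝ E]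
  [MeasurableSpace E] [BorelSpace E]

instance isOpenPosMeasure_stdGaussian : (stdGaussian E).IsOpenPosMeasure := by
  have := isOpenPosMeasure_gaussianReal 0 one_ne_zero
  exact Continuous.isOpenPosMeasure_map (by fun_prop) fun x =>
    ⟨(stdOrthonormalBasis ℝ E).repr x, (stdOrthonormalBasis ℝ E).sum_repr x⟩

theorem isStrictlyPosDefKernel_gaussian :
    IsStrictlyPosDefKernel fun x y : E => Real.exp (-‖x - y‖ ^ 2 / 2) :=
  isStrictlyPosDefKernel_of_charFun_eq (ρ := stdGaussian E) (k := fun z => Real.exp (-‖z‖ ^ 2 / 2))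
    fun x => by rw [charFun_stdGaussian]; push_cast; rfl

end Gaussian

section Sphere

open Metric

variable {E : Type*} [NormedAddCommGroup E] [InnerProductSpace ℝ E] {α : ℝ}

/-- The kernel `exp (α (⟪x, y⟫ - 1))` on the unit sphere. -/
noncomputable def sphereExpKernel (α : ℝ) (x y : sphere (0 : E) 1) : ℝ :=
  Real.exp (α * (⟪(x : E), y⟫ - 1))

/-- The self-map of the unit sphere induced by a linear isometry; on `EuclideanSpace` it is
definitionally `sphereRot`. -/
def sphereMap (R : E ≃ₗᵢ[ℝ] E) : sphere (0 : E) 1 → sphere (0 : E) 1 :=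
  Subtype.map R fun x hx => by simpa using hx

theorem continuous_sphereMap (R : E ≃ₗᵢ[ℝ] E) : Continuous (sphereMap R) :=
  R.continuous.subtype_map _

theorem exists_sphereMap_eq (x y : sphere (0 : E) 1) : ∃ R : E ≃ₗᵢ[ℝ] E, sphereMap R x = y := by
  have hnorm : ‖(x : E)‖ = ‖(y : E)‖ := by simp only [norm_eq_of_mem_sphere]
  exact ⟨(ℝ ∙ ((x : E) - y))ᗮ.reflection, Subtype.ext (Submodule.reflection_sub hnorm)⟩

theorem sphereExpKernel_comm (x y : sphere (0 : E) 1) :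
    sphereExpKernel α x y = sphereExpKernel α y x := by
  rw [sphereExpKernel, real_inner_comm, sphereExpKernel]

theorem sphereExpKernel_sphereMap (R : E ≃ₗᵢ[ℝ] E) (x y : sphere (0 : E) 1) :
    sphereExpKernel α (sphereMap R x) (sphereMap R y) = sphereExpKernel α x y := by
  simp only [sphereExpKernel, sphereMap, Subtype.map_coe, R.inner_map_map]

theorem continuous_uncurry_sphereExpKernel :
    Continuous (Function.uncurry (sphereExpKernel (E := E) α)) := by
  unfold Function.uncurry sphereExpKernel
  fun_prop

theorem sphereExpKernel_mem_Icc (hα : 0 ≤ α) (x y : sphere (0 : E) 1) :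
    sphereExpKernel α x y ∈ Set.Icc (Real.exp (-(2 * α))) 1 := by
  obtain ⟨hlower, hupper⟩ := real_inner_mem_Icc_of_norm_eq_one (norm_eq_of_mem_sphere x)
    (norm_eq_of_mem_sphere y)
  exact ⟨Real.exp_le_exp.2 (by nlinarith), Real.exp_le_one_iff.2 (by nlinarith)⟩

-- On the unit sphere `α * (⟪x, y⟫ - 1) = -‖√α • x - √α • y‖ ^ 2 / 2`.
theorem sphereExpKernel_eq_gaussian (hα : 0 ≤ α) (x y : sphere (0 : E) 1) :
    sphereExpKernel α x y = Real.exp (-‖√α • (x : E) - √α • (y : E)‖ ^ 2 / 2) := by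
  rw [sphereExpKernel, ← smul_sub, norm_smul, mul_pow, norm_sub_sq_real, norm_eq_of_mem_sphere,
    norm_eq_of_mem_sphere, Real.norm_eq_abs, sq_abs, Real.sq_sqrt hα]
  ring_nf

variable [MeasurableSpace E] [BorelSpace E]

theorem kernelPotential_sphereExpKernel_eq {σ : Measure (sphere (0 : E) 1)}
    (hσ : ∀ R : E ≃ₗᵢ[ℝ] E, σ.map (sphereMap R) = σ) (x y : sphere (0 : E) 1) :
    kernelPotential (sphereExpKernel α) σ x = kernelPotential (sphereExpKernel α) σ y := by
  obtain ⟨R, rfl⟩ := exists_sphereMap_eq x y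
  have hR : MeasurePreserving (sphereMap R) σ σ := ⟨(continuous_sphereMap R).measurable, hσ R⟩
  exact (kernelPotential_apply_of_measurePreserving hR
    (continuous_uncurry_sphereExpKernel.uncurry_left _).measurable
    (sphereExpKernel_sphereMap R x)).symm

variable [FiniteDimensional ℝ E]

theorem isStrictlyPosDefKernel_sphereExpKernel (hα : 0 < α) :
    IsStrictlyPosDefKernel (sphereExpKernel (E := E) α) := by
  have hemb : MeasurableEmbedding fun x : sphere (0 : E) 1 => √α • (x : E) :=
    (measurableEmbedding_const_smul₀ (Real.sqrt_pos.2 hα).ne').comp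
      (.subtype_coe isClosed_sphere.measurableSet)
  have hkernel : sphereExpKernel (E := E) α =
      fun x y : sphere (0 : E) 1 => Real.exp (-‖√α • (x : E) - √α • (y : E)‖ ^ 2 / 2) :=
    funext₂ (sphereExpKernel_eq_gaussian hα.le)
  rw [hkernel]
  exact isStrictlyPosDefKernel_gaussian.comp_measurableEmbedding hemb

theorem uniform_measure_unique_minimizer_general (hα : 0 < α) {σ μ : Measure (sphere (0 : E) 1)}
    [IsProbabilityMeasure σ] [IsProbabilityMeasure μ]
    (hσ : ∀ R : E ≃ₗᵢ[ℝ] E, σ.map (sphereMap R) = σ) :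
    logPotentialEnergy (sphereExpKernel α) σ ≤ logPotentialEnergy (sphereExpKernel α) μ ∧
      (logPotentialEnergy (sphereExpKernel α) μ = logPotentialEnergy (sphereExpKernel α) σ ↔
        μ = σ) :=
  (isStrictlyPosDefKernel_sphereExpKernel hα).logPotentialEnergy_unique_minimizer
    continuous_uncurry_sphereExpKernel.measurable (Real.exp_pos _)
    (sphereExpKernel_mem_Icc hα.le) sphereExpKernel_comm (kernelPotential_sphereExpKernel_eq hσ)

end Sphere

/-- Let `σ` be the uniform (rotation-invariant) probability measure on the
unit sphere `S ⊂ ℝ^d`, `d ≥ 2`, and `α > 0`. For a Borel probability measure `μ` on `S` set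
`L_α(μ) = ∫ log (∫ exp (α (⟪x,y⟫ - 1)) dμ(y)) dμ(x)`. Then `L_α(μ) ≥ L_α(σ)` with equality
iff `μ = σ`: the uniform measure is the unique minimizer. -/
theorem uniform_measure_unique_minimizer (d : ℕ) (hd : 2 ≤ d) (α : ℝ) (hα : 0 < α)
    (σ : Measure (Metric.sphere (0 : EuclideanSpace ℝ (Fin d)) 1))
    (hσprob : IsProbabilityMeasure σ)
    (hσinv : ∀ R : EuclideanSpace ℝ (Fin d) ≃ₗᵢ[ℝ] EuclideanSpace ℝ (Fin d),
      Measure.map (sphereRot R) σ = σ)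
    (μ : Measure (Metric.sphere (0 : EuclideanSpace ℝ (Fin d)) 1))
    (hμprob : IsProbabilityMeasure μ) :
    (∫ x, Real.log (∫ y, Real.exp (α * (⟪(x : EuclideanSpace ℝ (Fin d)),
        (y : EuclideanSpace ℝ (Fin d))⟫ - 1)) ∂σ) ∂σ) ≤
      (∫ x, Real.log (∫ y, Real.exp (α * (⟪(x : EuclideanSpace ℝ (Fin d)),
        (y : EuclideanSpace ℝ (Fin d))⟫ - 1)) ∂μ) ∂μ) ∧
    ((∫ x, Real.log (∫ y, Real.exp (α * (⟪(x : EuclideanSpace ℝ (Fin d)),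
        (y : EuclideanSpace ℝ (Fin d))⟫ - 1)) ∂μ) ∂μ) =
      (∫ x, Real.log (∫ y, Real.exp (α * (⟪(x : EuclideanSpace ℝ (Fin d)),
        (y : EuclideanSpace ℝ (Fin d))⟫ - 1)) ∂σ) ∂σ) ↔ μ = σ) :=
  uniform_measure_unique_minimizer_general hα hσinv
end

section
/- Let d ≥ 2, let S = {x ∈ ℝ^d : ‖x‖ = 1} be the unit sphere with uniform probability measure σ, and fix α > 0. Then for every integer n ≥ 1 and all points x_1, …, x_n ∈ S, (1/n²) · Σ_{i,j=1}^n e^{α⟨x_i, x_j⟩} ≥ ∫_S ∫_S e^{α⟨x,y⟩} dσ(x) dσ(y). -/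
open scoped RealInnerProductSpace BigOperators
open MeasureTheory

/-!
The kernel `exp (α ⟪x, y⟫)` is the Gram kernel `⟪φ x, φ y⟫` of a continuous map `φ` into a Hilbert
space, namely `φ x = ⨁ₖ (√α • x)^{⊗k} / √k!`. The energy of a probability measure `μ` is therefore
`‖∫ φ ∂μ‖²`. Put `v = ∫ φ ∂σ`. Reflections act transitively on the sphere and preserve `σ`, so
`⟪φ x, v⟫` does not depend on `x`; hence `⟪∫ φ ∂μ, v⟫ = ‖v‖²` for every `μ`, and Cauchy–Schwarz
gives `‖v‖ ≤ ‖∫ φ ∂μ‖`. The discrete energy is that of the empirical measure of the points.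
-/

section GramKernel

variable {X H : Type*} [NormedAddCommGroup H] [InnerProductSpace ℝ H]

lemma continuous_of_continuous_inner [TopologicalSpace X] {φ : X → H}
    (hφ : Continuous fun p : X × X ↦ ⟪φ p.1, φ p.2⟫) : Continuous φ := by
  refine continuous_iff_continuousAt.2 fun a ↦ tendsto_iff_norm_sub_tendsto_zero.2 ?_
  have hdiag : Continuous fun x ↦ ⟪φ x, φ x⟫ := hφ.comp (continuous_id.prodMk continuous_id)
  have hleft : Continuous fun x ↦ ⟪φ x, φ a⟫ := hφ.comp (continuous_id.prodMk continuous_const)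
  have hnorm (x : X) : ‖φ x - φ a‖ = √(⟪φ x, φ x⟫ - 2 * ⟪φ x, φ a⟫ + ⟪φ a, φ a⟫) := by
    rw [norm_eq_sqrt_real_inner, real_inner_sub_sub_self]
  have hcont : Continuous fun x ↦ ‖φ x - φ a‖ := by
    simp only [hnorm]
    fun_prop
  simpa using hcont.tendsto a

variable [CompleteSpace H] [MeasurableSpace X] {μ σ : Measure X} {φ : X → H}

lemma integral_integral_inner (hμ : Integrable φ μ) (hσ : Integrable φ σ) :
    ∫ a, ∫ b, ⟪φ a, φ b⟫ ∂σ ∂μ = ⟪∫ a, φ a ∂μ, ∫ b, φ b ∂σ⟫ := by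
  simp only [integral_inner hσ, real_inner_comm (∫ b, φ b ∂σ), integral_inner hμ]

lemma integral_integral_inner_le_of_const_potential
    [IsProbabilityMeasure μ] [IsProbabilityMeasure σ]
    (hμ : Integrable φ μ) (hσ : Integrable φ σ) {c : ℝ} (hc : ∀ a, ∫ b, ⟪φ a, φ b⟫ ∂σ = c) :
    ∫ a, ∫ b, ⟪φ a, φ b⟫ ∂σ ∂σ ≤ ∫ a, ∫ b, ⟪φ a, φ b⟫ ∂μ ∂μ := by
  set v := ∫ b, φ b ∂σ with hv
  set u := ∫ a, φ a ∂μ with hu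
  have hmixed : ⟪u, v⟫ = ⟪v, v⟫ := by
    rw [hu, hv, ← integral_integral_inner hμ hσ, ← integral_integral_inner hσ hσ]
    simp only [hc, integral_const, probReal_univ]
  have hcauchy : ‖v‖ * ‖v‖ ≤ ‖u‖ * ‖v‖ := by
    rw [← real_inner_self_eq_norm_mul_norm, ← hmixed]
    exact real_inner_le_norm u v
  have hnorm : ‖v‖ ≤ ‖u‖ := by
    rcases (norm_nonneg v).eq_or_lt with hzero | hpos
    · exact hzero ▸ norm_nonneg u
    · exact le_of_mul_le_mul_right hcauchy hpos
  rw [integral_integral_inner hσ hσ, integral_integral_inner hμ hμ,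
    real_inner_self_eq_norm_sq, real_inner_self_eq_norm_sq]
  gcongr

end GramKernel

section ExpVector

variable {ι : Type*} [Fintype ι]

/-- The tensor power `x^{⊗k}`, encoded by its coordinates `x (p 0) ⋯ x (p (k - 1))` in the standard
basis of `(ℝ^ι)^{⊗k}`, which is indexed by `p : Fin k → ι`. -/
noncomputable def tensorPow (k : ℕ) (x : EuclideanSpace ℝ ι) : EuclideanSpace ℝ (Fin k → ι) :=
  WithLp.toLp 2 fun p ↦ ∏ i, x (p i)

lemma inner_tensorPow (k : ℕ) (x y : EuclideanSpace ℝ ι) :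
    ⟪tensorPow k x, tensorPow k y⟫ = ⟪x, y⟫ ^ k := by
  simp only [tensorPow, PiLp.inner_apply, RCLike.inner_apply, conj_trivial, Fintype.sum_pow,
    Finset.prod_mul_distrib]

/-- The degree `k` component `x^{⊗k} / √k!` of the exponential vector of `x`. -/
noncomputable def expVectorComponent (x : EuclideanSpace ℝ ι) (k : ℕ) :
    EuclideanSpace ℝ (Fin k → ι) :=
  (√k.factorial)⁻¹ • tensorPow k x

lemma inner_expVectorComponent (x y : EuclideanSpace ℝ ι) (k : ℕ) :
    ⟪expVectorComponent x k, expVectorComponent y k⟫ = ⟪x, y⟫ ^ k / k.factorial := by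
  rw [expVectorComponent, expVectorComponent, real_inner_smul_left, real_inner_smul_right,
    inner_tensorPow, ← mul_assoc, ← mul_inv, Real.mul_self_sqrt (Nat.cast_nonneg _),
    inv_mul_eq_div]

lemma memℓp_expVectorComponent (x : EuclideanSpace ℝ ι) : Memℓp (expVectorComponent x) 2 := by
  refine memℓp_gen ?_
  simpa only [ENNReal.toReal_ofNat, Real.rpow_ofNat, ← real_inner_self_eq_norm_sq,
    inner_expVectorComponent] using Real.summable_pow_div_factorial ⟪x, x⟫

/-- The exponential vector (coherent state) `⨁ₖ x^{⊗k} / √k!` in the Fock space over `ℝ^ι`,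
a feature map for the kernel `exp ⟪x, y⟫`. -/
noncomputable def expVector (x : EuclideanSpace ℝ ι) :
    lp (fun k ↦ EuclideanSpace ℝ (Fin k → ι)) 2 :=
  ⟨expVectorComponent x, memℓp_expVectorComponent x⟩

lemma inner_expVector (x y : EuclideanSpace ℝ ι) :
    ⟪expVector x, expVector y⟫ = Real.exp ⟪x, y⟫ := by
  simp only [lp.inner_eq_tsum, expVector, inner_expVectorComponent, Real.exp_eq_exp_ℝ,
    NormedSpace.exp_eq_tsum_div]

lemma inner_expVector_sqrt_smul {α : ℝ} (hα : 0 ≤ α) (x y : EuclideanSpace ℝ ι) :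
    ⟪expVector (√α • x), expVector (√α • y)⟫ = Real.exp (α * ⟪x, y⟫) := by
  rw [inner_expVector, real_inner_smul_left, real_inner_smul_right, ← mul_assoc,
    Real.mul_self_sqrt hα]

lemma continuous_expVector : Continuous (expVector (ι := ι)) :=
  continuous_of_continuous_inner <| by
    simp only [inner_expVector]
    fun_prop

end ExpVector

section RotationInvariance

variable {d : ℕ}

lemma measurableEmbedding_sphereRot
    (R : EuclideanSpace ℝ (Fin d) ≃ₗᵢ[ℝ] EuclideanSpace ℝ (Fin d)) :
    MeasurableEmbedding (sphereRot R) :=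
  ((R.continuous.comp continuous_subtype_val).subtype_mk _).measurableEmbedding
    fun _ _ h ↦ Subtype.ext (R.injective (congrArg Subtype.val h))

lemma exists_sphereRot_eq (a b : Metric.sphere (0 : EuclideanSpace ℝ (Fin d)) 1) :
    ∃ R : EuclideanSpace ℝ (Fin d) ≃ₗᵢ[ℝ] EuclideanSpace ℝ (Fin d), sphereRot R a = b :=
  ⟨(ℝ ∙ ((a : EuclideanSpace ℝ (Fin d)) - b))ᗮ.reflection,
    Subtype.ext (Submodule.reflection_sub (by simp only [norm_eq_of_mem_sphere]))⟩

lemma integral_comp_inner_eq_of_map_sphereRot_eq {F : Type*} [NormedAddCommGroup F]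
    [NormedSpace ℝ F] {σ : Measure (Metric.sphere (0 : EuclideanSpace ℝ (Fin d)) 1)}
    (hσ : ∀ R, Measure.map (sphereRot R) σ = σ) (f : ℝ → F)
    (a a' : Metric.sphere (0 : EuclideanSpace ℝ (Fin d)) 1) :
    ∫ b, f ⟪(a : EuclideanSpace ℝ (Fin d)), (b : EuclideanSpace ℝ (Fin d))⟫ ∂σ =
      ∫ b, f ⟪(a' : EuclideanSpace ℝ (Fin d)), (b : EuclideanSpace ℝ (Fin d))⟫ ∂σ := by
  obtain ⟨R, rfl⟩ := exists_sphereRot_eq a a'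
  conv_rhs => rw [← hσ R, (measurableEmbedding_sphereRot R).integral_map]
  simp only [sphereRot, R.inner_map_map]

end RotationInvariance

section EmpiricalMeasure

variable {ι X : Type*} [Fintype ι] [MeasurableSpace X]

/-- The empirical measure of a finite family of points: each `x i` carries mass `1 / card ι`. -/
noncomputable def empiricalMeasure (x : ι → X) : Measure X :=
  (Fintype.card ι : ENNReal)⁻¹ • ∑ i, Measure.dirac (x i)

instance isProbabilityMeasure_empiricalMeasure [Nonempty ι] (x : ι → X) :
    IsProbabilityMeasure (empiricalMeasure x) where
  measure_univ := by
    simp [empiricalMeasure, ENNReal.inv_mul_cancel]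

lemma integral_empiricalMeasure [MeasurableSingletonClass X] {F : Type*} [NormedAddCommGroup F]
    [NormedSpace ℝ F] [CompleteSpace F] (x : ι → X) (f : X → F) :
    ∫ a, f a ∂(empiricalMeasure x) = (Fintype.card ι : ℝ)⁻¹ • ∑ i, f (x i) := by
  rw [empiricalMeasure, integral_smul_measure,
    integral_finsetSum_measure fun i _ ↦ integrable_dirac enorm_lt_top]
  simp only [integral_dirac, ENNReal.toReal_inv, ENNReal.toReal_natCast]

lemma integral_integral_empiricalMeasure [MeasurableSingletonClass X] (x : ι → X)
    (K : X → X → ℝ) :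
    ∫ a, ∫ b, K a b ∂(empiricalMeasure x) ∂(empiricalMeasure x) =
      (1 / (Fintype.card ι : ℝ) ^ 2) * ∑ i, ∑ j, K (x i) (x j) := by
  simp only [integral_empiricalMeasure, smul_eq_mul, ← Finset.mul_sum]
  ring

end EmpiricalMeasure

theorem discrete_energy_ge_continuous_energy_general {d : ℕ} {α : ℝ} (hα : 0 ≤ α)
    (σ μ : Measure (Metric.sphere (0 : EuclideanSpace ℝ (Fin d)) 1))
    [IsProbabilityMeasure σ] [IsProbabilityMeasure μ]
    (hσ : ∀ R, Measure.map (sphereRot R) σ = σ) :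
    (∫ a, ∫ b, Real.exp (α * ⟪(a : EuclideanSpace ℝ (Fin d)),
        (b : EuclideanSpace ℝ (Fin d))⟫) ∂σ ∂σ) ≤
      ∫ a, ∫ b, Real.exp (α * ⟪(a : EuclideanSpace ℝ (Fin d)),
        (b : EuclideanSpace ℝ (Fin d))⟫) ∂μ ∂μ := by
  let φ (a : Metric.sphere (0 : EuclideanSpace ℝ (Fin d)) 1) :=
    expVector (√α • (a : EuclideanSpace ℝ (Fin d)))
  have hinner (a b : Metric.sphere (0 : EuclideanSpace ℝ (Fin d)) 1) :
      Real.exp (α * ⟪(a : EuclideanSpace ℝ (Fin d)), (b : EuclideanSpace ℝ (Fin d))⟫) =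
        ⟪φ a, φ b⟫ := by
    simp only [φ, inner_expVector_sqrt_smul hα]
  have hintegrable (ν : Measure (Metric.sphere (0 : EuclideanSpace ℝ (Fin d)) 1))
      [IsFiniteMeasure ν] : Integrable φ ν :=
    (continuous_expVector.comp (by fun_prop)).integrable_of_hasCompactSupport
      (HasCompactSupport.of_compactSpace _)
  obtain ⟨a₀⟩ := σ.nonempty_of_neZero
  have hpotential (a : Metric.sphere (0 : EuclideanSpace ℝ (Fin d)) 1) :
      ∫ b, ⟪φ a, φ b⟫ ∂σ = ∫ b, ⟪φ a₀, φ b⟫ ∂σ := by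
    simp only [← hinner]
    exact integral_comp_inner_eq_of_map_sphereRot_eq hσ (fun t ↦ Real.exp (α * t)) a a₀
  simp only [hinner]
  exact integral_integral_inner_le_of_const_potential (hintegrable μ) (hintegrable σ) hpotential

/-- Let `σ` be the uniform (rotation-invariant) probability measure on the
unit sphere `S ⊂ ℝ^d`, `d ≥ 2`, and `α > 0`. For any `n ≥ 1` points `x i ∈ S`,
`(1/n²) ∑_{i,j} exp (α ⟪x i, x j⟫) ≥ ∫∫ exp (α ⟪x, y⟫) dσ(x) dσ(y)`. -/
theorem discrete_energy_ge_continuous_energy (d : ℕ) (hd : 2 ≤ d) (α : ℝ) (hα : 0 < α)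
    (σ : Measure (Metric.sphere (0 : EuclideanSpace ℝ (Fin d)) 1))
    (hσprob : IsProbabilityMeasure σ)
    (hσinv : ∀ R : EuclideanSpace ℝ (Fin d) ≃ₗᵢ[ℝ] EuclideanSpace ℝ (Fin d),
      Measure.map (sphereRot R) σ = σ)
    (n : ℕ) (hn : 1 ≤ n) (x : Fin n → Metric.sphere (0 : EuclideanSpace ℝ (Fin d)) 1) :
    (∫ a, ∫ b, Real.exp (α * ⟪(a : EuclideanSpace ℝ (Fin d)),
        (b : EuclideanSpace ℝ (Fin d))⟫) ∂σ ∂σ) ≤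
      (1 / (n : ℝ) ^ 2) * ∑ i, ∑ j, Real.exp (α * ⟪(x i : EuclideanSpace ℝ (Fin d)),
        (x j : EuclideanSpace ℝ (Fin d))⟫) := by
  have : Nonempty (Fin n) := ⟨⟨0, hn⟩⟩
  simpa only [integral_integral_empiricalMeasure, Fintype.card_fin] using
    discrete_energy_ge_continuous_energy_general hα.le σ (empiricalMeasure x) hσinv
end
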